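/- For D > 0 and r > 0, let Y(x) = e^{−|x|/r}/|x| be the Yukawa potential on ℝ³, and let W_D(x) = Y(D) for |x| < D and W_D(x) = Y(x) for |x| ≥ D. Then the measure μ_D = (4π)⁻¹(−Δ + r⁻²)W_D equals (4π)⁻¹ r⁻² Y(D) 1_{|x|<D} dx − (4π)⁻¹ Y′(D) δ(|x|=D) (surface measure on the sphere of radius D), is nonnegative, and ∫∫ Y(x−y) dμ_D(x) dμ_D(y) = (1/3)(D r⁻² + 3D⁻¹ + 3r⁻¹) e^{−2D/r}. -/

import Mathlib

open MeasureTheory Metric Real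

noncomputable section

/-- The Yukawa potential `Y_{1/r}(x) = e^{-|x|/r}/|x|` on `ℝ³`. -/
def yukawa (r : ℝ) (x : EuclideanSpace ℝ (Fin 3)) : ℝ := Real.exp (-‖x‖ / r) / ‖x‖

/-- The truncated potential `W_D`: constant `Y(D)` inside the ball of radius `D`,
and equal to the Yukawa potential outside. -/
def yukawaW (r D : ℝ) (x : EuclideanSpace ℝ (Fin 3)) : ℝ :=
  if ‖x‖ < D then Real.exp (-D / r) / D else yukawa r x

/-- The surface measure on the sphere of radius `D` centered at the origin in `ℝ³`. -/
def sphereSurfaceMeasure (D : ℝ) : Measure (EuclideanSpace ℝ (Fin 3)) :=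
  (ENNReal.ofReal (D ^ 2)) •
    Measure.map (fun p : Metric.sphere (0 : EuclideanSpace ℝ (Fin 3)) 1 =>
        D • (p : EuclideanSpace ℝ (Fin 3)))
      ((volume : Measure (EuclideanSpace ℝ (Fin 3))).toSphere)

/-- The smearing measure
`μ_D = (4π)⁻¹ r⁻² Y(D) 1_{|x|<D} dx − (4π)⁻¹ Y′(D) (surface measure on sphere of radius D)`,
where `Y′` is the radial derivative of the Yukawa potential. -/
def yukawaSmear (r D : ℝ) : Measure (EuclideanSpace ℝ (Fin 3)) :=
  (ENNReal.ofReal ((4 * π)⁻¹ * r⁻¹ ^ 2 * (Real.exp (-D / r) / D))) •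
      (volume.restrict (Metric.ball (0 : EuclideanSpace ℝ (Fin 3)) D))
    + (ENNReal.ofReal (-(4 * π)⁻¹ * deriv (fun s : ℝ => Real.exp (-s / r) / s) D)) •
      sphereSurfaceMeasure D

/-- The Laplacian of a function on `ℝ³`. -/
def lap (f : EuclideanSpace ℝ (Fin 3) → ℝ) (x : EuclideanSpace ℝ (Fin 3)) : ℝ :=
  ∑ i, fderiv ℝ (fun y => fderiv ℝ f y (EuclideanSpace.single i 1)) x
    (EuclideanSpace.single i 1)

abbrev E3 := EuclideanSpace ℝ (Fin 3)

/-- radial profile of the Yukawa potential -/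
def yv (r s : ℝ) : ℝ := Real.exp (-s / r) / s

/-- derivative of the radial profile -/
def yv' (r s : ℝ) : ℝ := -(Real.exp (-s / r) * (1 / (r * s) + 1 / s ^ 2))

/-- the radial flux -/
def yp (r s : ℝ) : ℝ := -(Real.exp (-s / r) * (s / r + 1))

/-- derivative of the radial flux -/
def yq (r s : ℝ) : ℝ := r⁻¹ ^ 2 * s * Real.exp (-s / r)

lemma exp_hasDerivAt (r s : ℝ) :
    HasDerivAt (fun s : ℝ => Real.exp (-s / r)) (Real.exp (-s / r) * (-1 / r)) s :=
  (((hasDerivAt_id s).neg).div_const r).exp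

lemma yv_hasDerivAt {r s : ℝ} (hs : s ≠ 0) : HasDerivAt (yv r) (yv' r s) s := by
  have h := (exp_hasDerivAt r s).div (hasDerivAt_id s) hs
  refine h.congr_deriv ?_
  by_cases hr : r = 0
  · subst hr; simp [yv']; field_simp
  · simp only [yv', id]; field_simp; ring

lemma yp_hasDerivAt {r : ℝ} (hr : 0 < r) (s : ℝ) : HasDerivAt (yp r) (yq r s) s := by
  have h := ((exp_hasDerivAt r s).mul (((hasDerivAt_id s).div_const r).add_const 1)).neg
  refine h.congr_deriv ?_
  simp only [yq, id]; field_simp; ring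

lemma yp_eq {r s : ℝ} (hr : 0 < r) (hs : s ≠ 0) : s ^ 2 * yv' r s = yp r s := by
  simp only [yp, yv']; field_simp

lemma yq_eq {r s : ℝ} (hs : s ≠ 0) : s ^ 2 * (r⁻¹ ^ 2 * yv r s) = yq r s := by
  simp only [yq, yv]; field_simp

lemma yp_tendsto {r : ℝ} (hr : 0 < r) : Filter.Tendsto (yp r) Filter.atTop (nhds 0) := by
  have h0 : Filter.Tendsto (fun s : ℝ => s / r) Filter.atTop Filter.atTop :=
    Filter.tendsto_id.atTop_div_const hr
  have h1 := (Real.tendsto_pow_mul_exp_neg_atTop_nhds_zero 1).comp h0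
  have h2 := (Real.tendsto_pow_mul_exp_neg_atTop_nhds_zero 0).comp h0
  have h3 := (h1.add h2).neg
  simp only [add_zero, neg_zero] at h3
  refine h3.congr (fun s => ?_)
  simp only [yp, Function.comp, pow_one, pow_zero, neg_div]; ring

lemma yq_integrable {r : ℝ} (hr : 0 < r) : IntegrableOn (yq r) (Set.Ioi 0) := by
  refine integrableOn_Ioi_deriv_of_nonneg' (g := yp r) (fun s _ => yp_hasDerivAt hr s)
    (fun s hs => ?_) (yp_tendsto hr)
  have : 0 < s := hs
  simp only [yq]; positivity

lemma yp_integrable {r : ℝ} (hr : 0 < r) : IntegrableOn (yp r) (Set.Ioi 0) := by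
  have h1 : IntegrableOn (fun s : ℝ => Real.exp (-(1/r) * s)) (Set.Ioi 0) :=
    integrableOn_exp_mul_Ioi (by simpa using hr) 0
  have h2 := (((yq_integrable hr).const_mul r).add h1).neg
  refine h2.congr (Filter.Eventually.of_forall fun s => ?_)
  have : -s / r = -(1/r) * s := by ring
  simp only [yp, yq, Pi.add_apply, Pi.neg_apply, this]
  field_simp

lemma oneD {r : ℝ} (hr : 0 < r) (a : ℝ) (g g' : ℝ → ℝ)
    (hc : ContinuousWithinAt g (Set.Ici a) a)
    (hd : ∀ s, a < s → HasDerivAt g (g' s) s) (C : ℝ)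
    (hb : ∀ᶠ s in Filter.atTop, |g s| ≤ C)
    (hint : IntegrableOn (fun s => yp r s * g' s + yq r s * g s) (Set.Ioi a)) :
    ∫ s in Set.Ioi a, (yp r s * g' s + yq r s * g s) = - yp r a * g a := by
  have h := integral_Ioi_of_hasDerivAt_of_tendsto (f := fun s => yp r s * g s) (a := a) (m := 0)
    (f' := fun s => yp r s * g' s + yq r s * g s) ?_ ?_ hint ?_
  · rw [h]; ring
  · exact (yp_hasDerivAt hr a).continuousAt.continuousWithinAt.mul hc
  · intro s hs
    exact ((yp_hasDerivAt hr s).mul (hd s hs)).congr_deriv (by ring)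
  · refine (yp_tendsto hr).zero_mul_isBoundedUnder_le ?_
    exact ⟨C, by simpa using hb⟩

/-- surface measure on the unit sphere -/
abbrev sig : Measure (Metric.sphere (0 : E3) 1) := (volume : Measure E3).toSphere

lemma sig_univ : sig.real Set.univ = 4 * π := by
  rw [Measure.toSphere_real_apply_univ, Measure.real, EuclideanSpace.volume_ball_fin_three]
  have : (0:ℝ) ≤ π * 4 / 3 := by positivity
  simp [ENNReal.toReal_ofReal this]
  try ring

lemma polar (F : E3 → ℝ) (hF : Integrable F) :
    (∀ᵐ (ω : Metric.sphere (0 : E3) 1) ∂sig, IntegrableOn (fun s : ℝ => s ^ 2 * F (s • (ω : E3))) (Set.Ioi 0)) ∧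
    Integrable (fun ω : Metric.sphere (0 : E3) 1 =>
      ∫ s in Set.Ioi (0 : ℝ), s ^ 2 * F (s • (ω : E3))) sig ∧
    ∫ x, F x = ∫ ω, (∫ s in Set.Ioi (0 : ℝ), s ^ 2 * F (s • (ω : E3))) ∂sig := by
  have hmp := (volume : Measure E3).measurePreserving_homeomorphUnitSphereProd
  have hdim : Module.finrank ℝ E3 - 1 = 2 := by simp
  rw [hdim] at hmp
  set G : Metric.sphere (0 : E3) 1 × Set.Ioi (0 : ℝ) → ℝ := fun p => F (p.2.1 • (p.1 : E3)) with hG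
  have hGe : ∀ x : ({0}ᶜ : Set E3), G (homeomorphUnitSphereProd E3 x) = F x := by
    intro x
    simp only [hG]
    congr 1
    have hx : ‖(x : E3)‖ ≠ 0 := norm_ne_zero_iff.2 x.2
    simp [smul_smul, hx]
  have hint : Integrable G (sig.prod (Measure.volumeIoiPow 2)) := by
    rw [← hmp.integrable_comp_emb (Homeomorph.measurableEmbedding _)]
    have : G ∘ (homeomorphUnitSphereProd E3) = F ∘ Subtype.val := funext hGe
    rw [this, ← integrableOn_iff_comap_subtypeVal (measurableSet_singleton _).compl]
    exact hF.integrableOn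
  have hinner : ∀ ω : Metric.sphere (0 : E3) 1, ∫ s, G (ω, s) ∂(Measure.volumeIoiPow 2)
      = ∫ s in Set.Ioi (0 : ℝ), s ^ 2 * F (s • (ω : E3)) := by
    intro ω
    simp only [Measure.volumeIoiPow, ENNReal.ofReal]
    rw [integral_withDensity_eq_integral_smul,
        integral_subtype_comap measurableSet_Ioi
          fun a ↦ Real.toNNReal (a ^ 2) • F (a • (ω : E3)),
        setIntegral_congr_fun measurableSet_Ioi fun x hx ↦ ?_]
    · rw [NNReal.smul_def, Real.coe_toNNReal _ (pow_nonneg (le_of_lt hx) _), smul_eq_mul]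
    · exact (measurable_subtype_coe.pow_const _).real_toNNReal
  refine ⟨?_, ?_, ?_⟩
  · filter_upwards [hint.prod_right_ae] with ω hω
    rw [Measure.volumeIoiPow, integrable_withDensity_iff_integrable_smul'] at hω
    · rw [integrableOn_iff_comap_subtypeVal measurableSet_Ioi]
      refine hω.congr (.of_forall ?_)
      rintro ⟨s, hs⟩
      have hs : 0 < s := hs
      simp [hG, ENNReal.toReal_ofReal, sq_nonneg]
    · fun_prop
    · simp
  · simpa only [hinner] using hint.integral_prod_left
  · calc ∫ x, F x = ∫ x : ({(0)}ᶜ : Set E3), F x.1 ∂((volume : Measure E3).comap Subtype.val) := by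
          rw [integral_subtype_comap (measurableSet_singleton _).compl fun x ↦ F x,
            restrict_compl_singleton]
      _ = ∫ x, G x ∂(sig.prod (Measure.volumeIoiPow 2)) := by
          rw [← hmp.integral_comp (Homeomorph.measurableEmbedding _)]
          simp only [hGe]
      _ = _ := by
          rw [integral_prod _ hint]
          simp only [hinner]

lemma radial_yv {r : ℝ} (hr : 0 < r) : Integrable (fun z : E3 => yv r ‖z‖) := by
  rw [integrable_fun_norm_addHaar volume (f := yv r)]
  have h : IntegrableOn (fun s => r ^ 2 * yq r s) (Set.Ioi 0) := (yq_integrable hr).const_mul (r ^ 2)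
  refine h.congr_fun ?_ measurableSet_Ioi
  intro s hs
  have hs : 0 < s := hs
  simp [yq, yv]; try field_simp

lemma radial_yv' {r : ℝ} (hr : 0 < r) : Integrable (fun z : E3 => yv' r ‖z‖) := by
  rw [integrable_fun_norm_addHaar volume (f := yv' r)]
  refine (yp_integrable hr).congr_fun ?_ measurableSet_Ioi
  intro s hs
  have hs : 0 < s := hs
  have h := yp_eq hr hs.ne'
  simpa using h.symm

lemma norm_line (x ω : E3) (s : ℝ) (h : x + s • ω ≠ 0) :
    HasDerivAt (fun s : ℝ => ‖x + s • ω‖) (inner ℝ (x + s • ω) ω / ‖x + s • ω‖) s := by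
  have h1 : HasDerivAt (fun s : ℝ => x + s • ω) ω s := by
    simpa using ((hasDerivAt_id s).smul_const ω).const_add x
  have h2 := h1.norm_sq.sqrt (by positivity)
  simp only [Real.sqrt_sq (norm_nonneg _)] at h2
  refine h2.congr_deriv ?_
  field_simp

lemma yv_line (r : ℝ) (x ω : E3) (s : ℝ) (h : x + s • ω ≠ 0) :
    HasDerivAt (fun s : ℝ => yv r ‖x + s • ω‖)
      (yv' r ‖x + s • ω‖ * (inner ℝ (x + s • ω) ω / ‖x + s • ω‖)) s := by
  have h1 := yv_hasDerivAt (r := r) (norm_ne_zero_iff.2 h)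
  exact HasDerivAt.comp s h1 (norm_line x ω s h)

lemma yv_bound {r D s : ℝ} (hr : 0 < r) (hD : 0 < D) (hs : D ≤ s) : |yv r s| ≤ 1 / D := by
  have hs0 : 0 < s := hD.trans_le hs
  rw [yv, abs_of_pos (by positivity)]
  have : Real.exp (-s / r) ≤ 1 := by
    rw [Real.exp_le_one_iff, neg_div]; simp; positivity
  gcongr

lemma yv'_bound {r D s : ℝ} (hr : 0 < r) (hD : 0 < D) (hs : D ≤ s) :
    |yv' r s| ≤ 1 / (r * D) + 1 / D ^ 2 := by
  have hs0 : 0 < s := hD.trans_le hs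
  rw [yv', abs_neg, abs_of_pos (by positivity)]
  have : Real.exp (-s / r) ≤ 1 := by
    rw [Real.exp_le_one_iff, neg_div]; simp; positivity
  calc _ ≤ 1 * (1 / (r * s) + 1 / s ^ 2) := by gcongr
    _ ≤ _ := by rw [one_mul]; gcongr

lemma yv_meas (r : ℝ) : Measurable (yv r) := by unfold yv; fun_prop
lemma yv'_meas (r : ℝ) : Measurable (yv' r) := by unfold yv'; fun_prop

lemma lemA {r D : ℝ} (hr : 0 < r) (hD : 0 < D) (f G : E3 → ℝ) (C : ℝ)
    (hd : ∀ᵐ (ω : Metric.sphere (0 : E3) 1) ∂sig, (∀ s : ℝ, D ≤ s →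
      HasDerivAt (fun s : ℝ => f (s • (ω : E3))) (G (s • (ω : E3))) s) ∧
      ∀ᶠ s : ℝ in Filter.atTop, |f (s • (ω : E3))| ≤ C)
    (hL : Integrable ({y : E3 | D < ‖y‖}.indicator
      (fun y => yv' r ‖y‖ * G y + r⁻¹ ^ 2 * yv r ‖y‖ * f y))) :
    Integrable (fun ω : Metric.sphere (0 : E3) 1 => f (D • (ω : E3))) sig ∧
    ∫ y, {y : E3 | D < ‖y‖}.indicator
      (fun y => yv' r ‖y‖ * G y + r⁻¹ ^ 2 * yv r ‖y‖ * f y) y =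
      - yp r D * ∫ ω, f (D • (ω : E3)) ∂sig := by
  obtain ⟨h1, h2, h3⟩ := polar _ hL
  have key : ∀ᵐ (ω : Metric.sphere (0 : E3) 1) ∂sig, ∫ s in Set.Ioi (0 : ℝ), s ^ 2 * ({y : E3 | D < ‖y‖}.indicator
      (fun y => yv' r ‖y‖ * G y + r⁻¹ ^ 2 * yv r ‖y‖ * f y)) (s • (ω : E3))
      = - yp r D * f (D • (ω : E3)) := by
    filter_upwards [h1, hd] with ω hω1 hω2
    have heq : Set.EqOn (fun s : ℝ => s ^ 2 * ({y : E3 | D < ‖y‖}.indicator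
      (fun y => yv' r ‖y‖ * G y + r⁻¹ ^ 2 * yv r ‖y‖ * f y)) (s • (ω : E3)))
      ((Set.Ioi D).indicator (fun s => yp r s * G (s • (ω : E3)) + yq r s * f (s • (ω : E3))))
      (Set.Ioi 0) := by
      intro s hs
      have hs : 0 < s := hs
      have hn : ‖s • (ω : E3)‖ = s := by
        rw [norm_smul]; simp [abs_of_pos hs]
      simp only [Set.indicator, Set.mem_ofPred_eq, hn, Set.mem_Ioi]
      split_ifs
      · rw [← yp_eq hr hs.ne', ← yq_eq hs.ne']; ring
      · simp
    have hsub : Set.Ioi (0 : ℝ) ∩ Set.Ioi D = Set.Ioi D := by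
      ext s; simp; intro h; linarith
    rw [setIntegral_congr_fun measurableSet_Ioi heq, setIntegral_indicator measurableSet_Ioi, hsub]
    have hω1' := hω1.congr_fun heq measurableSet_Ioi
    rw [integrableOn_indicator_iff measurableSet_Ioi, Set.inter_comm, hsub] at hω1'
    exact oneD hr D (fun s => f (s • (ω : E3))) (fun s => G (s • (ω : E3)))
      (hω2.1 D le_rfl).continuousAt.continuousWithinAt (fun s hs => hω2.1 s hs.le) C hω2.2 hω1'
  have hp : yp r D ≠ 0 := by
    have : 0 < Real.exp (-D / r) * (D / r + 1) := by positivity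
    simp only [yp]; linarith
  constructor
  · have h4 := (h2.congr key).const_mul (- yp r D)⁻¹
    refine h4.congr (.of_forall fun ω => ?_)
    field_simp
  · rw [h3, integral_congr_ae key, integral_const_mul]

open scoped Pointwise in
lemma sig_null (x : E3) : ∀ᵐ (ω : Metric.sphere (0 : E3) 1) ∂sig,
    ∀ s : ℝ, 0 < s → s • (ω : E3) ≠ x := by
  by_cases hex : ∃ ω0 : Metric.sphere (0 : E3) 1, ∃ s : ℝ, 0 < s ∧ s • (ω0 : E3) = x
  · obtain ⟨ω0, s0, hs0, h0⟩ := hex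
    have hnull : sig {ω0} = 0 := by
      rw [Measure.toSphere_apply' _ (measurableSet_singleton _)]
      have hsub : (Set.Ioo (0 : ℝ) 1 • ((↑) '' {ω0} : Set E3))
          ⊆ ((ℝ ∙ (ω0 : E3)) : Set E3) := by
        rintro _ ⟨t, _, _, ⟨w, hw, rfl⟩, rfl⟩
        rw [Set.mem_singleton_iff] at hw
        subst hw
        exact Submodule.smul_mem _ _ (Submodule.mem_span_singleton_self _)
      have h2 : volume ((ℝ ∙ (ω0 : E3)) : Set E3) = 0 := by
        apply Measure.addHaar_submodule
        intro htop
        have h3 : Module.finrank ℝ (ℝ ∙ (ω0 : E3)) ≤ 1 := by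
          simpa using finrank_span_le_card (R := ℝ) ({(ω0 : E3)} : Set E3)
        rw [htop, finrank_top] at h3
        simp at h3
      rw [measure_mono_null hsub h2, mul_zero]
    have h5 : ∀ᵐ (ω : Metric.sphere (0 : E3) 1) ∂sig, ω ≠ ω0 := by
      rw [ae_iff]; simpa using hnull
    filter_upwards [h5] with ω hω s hs heq
    apply hω
    have n1 : ‖s • (ω : E3)‖ = s := by rw [norm_smul]; simp [abs_of_pos hs]
    have n2 : ‖s0 • (ω0 : E3)‖ = s0 := by rw [norm_smul]; simp [abs_of_pos hs0]
    have hss : s = s0 := by rw [← n1, ← n2, heq, h0]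
    subst hss
    apply Subtype.ext
    exact smul_right_injective E3 hs.ne' (heq.trans h0.symm)
  · push Not at hex
    exact .of_forall fun ω s hs => hex ω s hs

lemma exit_time {D : ℝ} (hD : 0 < D) (x ω : E3) (hx : ‖x‖ ≤ D) (hω : ‖ω‖ = 1) :
    ∃ s0 : ℝ, 0 ≤ s0 ∧ ‖x + s0 • ω‖ = D ∧ (∀ s, s0 < s → D < ‖x + s • ω‖) ∧
      ∀ s, 0 < s → s ≤ s0 → ‖x + s • ω‖ ≤ D := by
  have hn : ∀ s : ℝ, ‖x + s • ω‖ ^ 2 = ‖x‖ ^ 2 + 2 * s * inner ℝ x ω + s ^ 2 := by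
    intro s
    rw [norm_add_sq_real, norm_smul, inner_smul_right, hω]
    simp; ring
  set b : ℝ := inner ℝ x ω
  have hxx : ‖x‖ ^ 2 ≤ D ^ 2 := by gcongr
  have hdisc : 0 ≤ b ^ 2 + D ^ 2 - ‖x‖ ^ 2 := by nlinarith [sq_nonneg b]
  set q := √(b ^ 2 + D ^ 2 - ‖x‖ ^ 2) with hq
  have hq2 : q ^ 2 = b ^ 2 + D ^ 2 - ‖x‖ ^ 2 := Real.sq_sqrt hdisc
  have hq0 : 0 ≤ q := Real.sqrt_nonneg _
  have hbq : |b| ≤ q := by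
    apply Real.abs_le_sqrt; linarith
  have hb1 := abs_le.1 hbq
  refine ⟨-b + q, by linarith [hb1.2], ?_, ?_, ?_⟩
  · rw [← sq_eq_sq₀ (norm_nonneg _) hD.le, hn]
    nlinarith
  · intro s hs
    apply lt_of_pow_lt_pow_left₀ 2 (norm_nonneg _)
    rw [hn]
    nlinarith
  · intro s hs hs'
    refine (sq_le_sq₀ (norm_nonneg _) hD.le).1 ?_
    rw [hn]
    nlinarith [mul_nonneg (sub_nonneg.2 hs') (show 0 ≤ s + b + q by linarith [hb1.1])]

/-- radial derivative of the translated Yukawa potential -/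
def GG (r : ℝ) (x y : E3) : ℝ :=
  yv' r ‖y - x‖ * (inner ℝ (y - x) (‖y‖⁻¹ • y) / ‖y - x‖)

lemma GG_bound (r : ℝ) (x y : E3) : |GG r x y| ≤ |yv' r ‖y - x‖| := by
  rw [GG, abs_mul]
  apply mul_le_of_le_one_right (abs_nonneg _)
  rw [abs_div, abs_norm]
  apply div_le_one_of_le₀ _ (norm_nonneg _)
  refine (abs_real_inner_le_norm _ _).trans ?_
  apply mul_le_of_le_one_right (norm_nonneg _)
  rw [norm_smul, norm_inv, norm_norm]
  exact inv_mul_le_one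

lemma GG_meas (r : ℝ) (x : E3) : Measurable (GG r x) := by
  have := yv'_meas r
  unfold GG
  fun_prop

lemma shift_yv {r : ℝ} (hr : 0 < r) (x : E3) : Integrable (fun y : E3 => yv r ‖y - x‖) :=
  (radial_yv hr).comp_sub_right x

lemma GG_int {r : ℝ} (hr : 0 < r) (x : E3) : Integrable (GG r x) := by
  refine ((radial_yv' hr).comp_sub_right x).mono (GG_meas r x).aestronglyMeasurable
    (.of_forall fun y => ?_)
  exact GG_bound r x y

lemma L_int {r D : ℝ} (hr : 0 < r) (hD : 0 < D) (f G : E3 → ℝ) (hf : Integrable f)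
    (hG : Integrable G) : Integrable ({y : E3 | D < ‖y‖}.indicator
      (fun y => yv' r ‖y‖ * G y + r⁻¹ ^ 2 * yv r ‖y‖ * f y)) := by
  have hm : MeasurableSet {y : E3 | D < ‖y‖} := measurableSet_lt measurable_const measurable_norm
  rw [integrable_indicator_iff hm]
  apply Integrable.add
  · refine Integrable.bdd_mul (c := 1 / (r * D) + 1 / D ^ 2) hG.integrableOn
      ((yv'_meas r).comp measurable_norm).aestronglyMeasurable ?_
    filter_upwards [ae_restrict_mem hm] with y hy
    exact yv'_bound hr hD (le_of_lt hy)
  · refine Integrable.bdd_mul (c := r⁻¹ ^ 2 * (1 / D)) hf.integrableOn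
      (((yv_meas r).comp measurable_norm).const_mul _).aestronglyMeasurable ?_
    filter_upwards [ae_restrict_mem hm] with y hy
    rw [norm_mul, Real.norm_of_nonneg (by positivity)]
    gcongr
    exact yv_bound hr hD (le_of_lt hy)

lemma potA {r D : ℝ} (hr : 0 < r) (hD : 0 < D) (x : E3) :
    Integrable (fun ω : Metric.sphere (0 : E3) 1 => yv r ‖D • (ω : E3) - x‖) sig ∧
    ∫ y, {y : E3 | D < ‖y‖}.indicator
      (fun y => yv' r ‖y‖ * GG r x y + r⁻¹ ^ 2 * yv r ‖y‖ * yv r ‖y - x‖) y =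
      - yp r D * ∫ ω : Metric.sphere (0 : E3) 1, yv r ‖D • (ω : E3) - x‖ ∂sig := by
  refine lemA hr hD (fun y => yv r ‖y - x‖) (GG r x) 1 ?_
    (L_int hr hD _ _ (shift_yv hr x) (GG_int hr x))
  filter_upwards [sig_null x] with ω hω
  constructor
  · intro s hs
    have hs0 : 0 < s := hD.trans_le hs
    have hne : -x + s • (ω : E3) ≠ 0 := by
      have := hω s hs0
      rw [neg_add_eq_sub, sub_ne_zero]; exact this
    have h := yv_line r (-x) (ω : E3) s hne
    simp only [neg_add_eq_sub] at h
    refine h.congr_deriv ?_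
    have hn : ‖s • (ω : E3)‖ = s := by rw [norm_smul]; simp [abs_of_pos hs0]
    rw [GG, hn, smul_smul, inv_mul_cancel₀ hs0.ne', one_smul]
  · filter_upwards [Filter.eventually_ge_atTop (1 + ‖x‖)] with s hs
    have hs0 : 0 < s := by linarith [norm_nonneg x]
    have hn : ‖s • (ω : E3)‖ = s := by rw [norm_smul]; simp [abs_of_pos hs0]
    have := norm_sub_norm_le (s • (ω : E3)) x
    have h := yv_bound hr one_pos (s := ‖s • (ω : E3) - x‖) (by linarith)
    simpa using h

lemma potB {r D : ℝ} (hr : 0 < r) (hD : 0 < D) (x : E3) (hx : ‖x‖ ≤ D) :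
    (∫ y, {y : E3 | D < ‖y‖}.indicator
      (fun y => yv' r ‖y‖ * GG r x y + r⁻¹ ^ 2 * yv r ‖y‖ * yv r ‖y - x‖) y)
      + ∫ y, {y : E3 | D < ‖y‖}ᶜ.indicator (fun y => r⁻¹ ^ 2 * yv r D * yv r ‖y - x‖) y
      = 4 * π * yv r D := by
  have hm : MeasurableSet {y : E3 | D < ‖y‖} := measurableSet_lt measurable_const measurable_norm
  have i1 := L_int hr hD _ _ (shift_yv hr x) (GG_int hr x)
  have i2 : Integrable ({y : E3 | D < ‖y‖}ᶜ.indicator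
      (fun y => r⁻¹ ^ 2 * yv r D * yv r ‖y - x‖)) :=
    ((shift_yv hr x).const_mul _).indicator hm.compl
  rw [← integral_add i1 i2]
  have i3 := (i1.add i2).comp_add_right x
  have e3 := integral_add_right_eq_self (μ := (volume : Measure E3)) (fun y => {y : E3 | D < ‖y‖}.indicator
      (fun y => yv' r ‖y‖ * GG r x y + r⁻¹ ^ 2 * yv r ‖y‖ * yv r ‖y - x‖) y
      + {y : E3 | D < ‖y‖}ᶜ.indicator (fun y => r⁻¹ ^ 2 * yv r D * yv r ‖y - x‖) y) x
  rw [← e3]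
  obtain ⟨h1, -, h3⟩ := polar _ i3
  simp only [Pi.add_apply] at h1 h3
  rw [h3]
  have key : ∀ᵐ (ω : Metric.sphere (0 : E3) 1) ∂sig, ∫ s in Set.Ioi (0 : ℝ), s ^ 2 *
      ({y : E3 | D < ‖y‖}.indicator
      (fun y => yv' r ‖y‖ * GG r x y + r⁻¹ ^ 2 * yv r ‖y‖ * yv r ‖y - x‖) (s • (ω : E3) + x)
      + {y : E3 | D < ‖y‖}ᶜ.indicator (fun y => r⁻¹ ^ 2 * yv r D * yv r ‖y - x‖)
        (s • (ω : E3) + x)) = yv r D := by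
    filter_upwards [h1] with ω hω
    obtain ⟨s0, hs0, hsD, hout, hin⟩ := exit_time hD x (ω : E3) hx (by simp)
    set F : ℝ → ℝ := fun s => s ^ 2 *
      ({y : E3 | D < ‖y‖}.indicator
      (fun y => yv' r ‖y‖ * GG r x y + r⁻¹ ^ 2 * yv r ‖y‖ * yv r ‖y - x‖) (s • (ω : E3) + x)
      + {y : E3 | D < ‖y‖}ᶜ.indicator (fun y => r⁻¹ ^ 2 * yv r D * yv r ‖y - x‖)
        (s • (ω : E3) + x)) with hF
    have hnorm : ∀ s : ℝ, 0 < s → ‖s • (ω : E3)‖ = s := fun s hs => by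
      rw [norm_smul]; simp [abs_of_pos hs]
    have hFout : Set.EqOn F (fun s => yp r s * (yv' r ‖x + s • (ω : E3)‖ *
        (inner ℝ (x + s • (ω : E3)) (ω : E3) / ‖x + s • (ω : E3)‖))
        + yq r s * yv r ‖x + s • (ω : E3)‖) (Set.Ioi s0) := by
      intro s hs
      have hs : s0 < s := hs
      have hsp : 0 < s := by linarith
      have hmem : s • (ω : E3) + x ∈ {y : E3 | D < ‖y‖} := by
        rw [add_comm]; exact hout s hs
      have hnm : s • (ω : E3) + x ∉ {y : E3 | D < ‖y‖}ᶜ := fun h => h hmem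
      simp only [hF]
      rw [Set.indicator_of_mem hmem, Set.indicator_of_notMem hnm, ← yp_eq hr hsp.ne',
        ← yq_eq hsp.ne', GG, add_sub_cancel_right, hnorm s hsp, real_inner_smul_left,
        real_inner_smul_right, real_inner_comm, add_comm x]
      field_simp
      ring
    have hFin : Set.EqOn F (fun s => yq r s * yv r D) (Set.Ioc 0 s0) := by
      intro s hs
      have hsp : 0 < s := hs.1
      have hnm : s • (ω : E3) + x ∉ {y : E3 | D < ‖y‖} := by
        rw [add_comm]; exact not_lt.2 (hin s hs.1 hs.2)
      have hmem : s • (ω : E3) + x ∈ {y : E3 | D < ‖y‖}ᶜ := hnm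
      simp only [hF]
      rw [Set.indicator_of_mem hmem, Set.indicator_of_notMem hnm, 
        ← yq_eq hsp.ne', add_sub_cancel_right, hnorm s hsp]
      simp only [yv]
      field_simp
      ring
    have hIoi : IntegrableOn F (Set.Ioi s0) := hω.mono_set (Set.Ioi_subset_Ioi hs0)
    have hIoc : IntegrableOn F (Set.Ioc 0 s0) := hω.mono_set Set.Ioc_subset_Ioi_self
    rw [← Set.Ioc_union_Ioi_eq_Ioi hs0, setIntegral_union (Set.Ioc_disjoint_Ioi le_rfl)
      measurableSet_Ioi hIoc hIoi, setIntegral_congr_fun measurableSet_Ioc hFin,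
      setIntegral_congr_fun measurableSet_Ioi hFout]
    have hne : ∀ s, s0 ≤ s → x + s • (ω : E3) ≠ 0 := by
      intro s hs h0
      rcases hs.eq_or_lt with h | h
      · subst h; rw [h0, norm_zero] at hsD; linarith
      · have := hout s h; rw [h0, norm_zero] at this; linarith
    rw [oneD hr s0 (fun s => yv r ‖x + s • (ω : E3)‖) _
      (yv_line r x ω s0 (hne s0 le_rfl)).continuousAt.continuousWithinAt
      (fun s hs => yv_line r x ω s (hne s hs.le)) (1 / D) ?_
      (hIoi.congr_fun hFout measurableSet_Ioi)]
    · have hI : ∫ s in Set.Ioc 0 s0, yq r s * yv r D = (yp r s0 - yp r 0) * yv r D := by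
        rw [integral_mul_const, ← intervalIntegral.integral_of_le hs0]
        congr 1
        apply intervalIntegral.integral_eq_sub_of_hasDerivAt
        · intro s _; exact yp_hasDerivAt hr s
        · apply Continuous.intervalIntegrable
          unfold yq; fun_prop
      rw [hI, hsD]
      have : yp r 0 = -1 := by simp [yp]
      rw [this]; ring
    · filter_upwards [Filter.eventually_gt_atTop s0] with s hs
      exact yv_bound hr hD (hout s hs).le
  rw [integral_congr_ae key, integral_const, sig_univ, smul_eq_mul]

lemma compl_int (D : ℝ) (F : E3 → ℝ) :
    ∫ y, {y : E3 | D < ‖y‖}ᶜ.indicator F y = ∫ y in Metric.ball 0 D, F y := by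
  have hm : MeasurableSet {y : E3 | D < ‖y‖} := measurableSet_lt measurable_const measurable_norm
  have : {y : E3 | D < ‖y‖}ᶜ = Metric.closedBall 0 D := by ext y; simp
  rw [integral_indicator hm.compl, this]
  apply setIntegral_congr_set
  rw [← Metric.ball_union_sphere]
  exact union_ae_eq_left_of_ae_eq_empty (ae_eq_empty.2 (Measure.addHaar_sphere _ _ _))

lemma yv_deriv_eq {r D : ℝ} (hD : 0 < D) :
    deriv (fun s : ℝ => Real.exp (-s / r) / s) D = yv' r D :=
  (yv_hasDerivAt hD.ne').deriv

lemma coef_nonneg {r D : ℝ} (hr : 0 < r) (hD : 0 < D) : 0 ≤ -(4 * π)⁻¹ * yv' r D := by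
  rw [yv', neg_mul_neg]; positivity

lemma smear_integral {r D : ℝ} (hr : 0 < r) (hD : 0 < D) (F : E3 → ℝ) (hF : Measurable F)
    (h1 : IntegrableOn F (Metric.ball 0 D))
    (h2 : Integrable (fun ω : Metric.sphere (0 : E3) 1 => F (D • (ω : E3))) sig) :
    ∫ y, F y ∂(yukawaSmear r D) = (4 * π)⁻¹ * (r⁻¹ ^ 2 * yv r D * (∫ y in Metric.ball 0 D, F y)
      - yp r D * ∫ ω : Metric.sphere (0 : E3) 1, F (D • (ω : E3)) ∂sig) := by
  have hm : Measurable (fun p : Metric.sphere (0 : E3) 1 => D • (p : E3)) := by fun_prop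
  have h3 : Integrable F (sphereSurfaceMeasure D) := by
    unfold sphereSurfaceMeasure
    apply Integrable.smul_measure _ ENNReal.ofReal_ne_top
    rwa [integrable_map_measure hF.aestronglyMeasurable hm.aemeasurable]
  rw [yukawaSmear, yv_deriv_eq hD, integral_add_measure (h1.smul_measure ENNReal.ofReal_ne_top)
    (h3.smul_measure ENNReal.ofReal_ne_top), integral_smul_measure, integral_smul_measure,
    sphereSurfaceMeasure, integral_smul_measure,
    integral_map hm.aemeasurable hF.aestronglyMeasurable,
    ENNReal.toReal_ofReal (coef_nonneg hr hD), ENNReal.toReal_ofReal (by positivity),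
    ENNReal.toReal_ofReal (by positivity), ← yp_eq hr hD.ne']
  simp only [smul_eq_mul, yv]
  ring

lemma potential {r D : ℝ} (hr : 0 < r) (hD : 0 < D) (x : E3) (hx : ‖x‖ ≤ D) :
    ∫ y, yukawa r (x - y) ∂(yukawaSmear r D) = yv r D := by
  have he : ∀ y, yukawa r (x - y) = yv r ‖y - x‖ := by
    intro y; rw [yukawa, yv, norm_sub_rev]
  simp only [he]
  obtain ⟨a1, a2⟩ := potA hr hD x
  have b := potB hr hD x hx
  rw [compl_int, integral_const_mul, a2] at b
  rw [smear_integral hr hD (fun y => yv r ‖y - x‖)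
    ((yv_meas r).comp (by fun_prop)) (shift_yv hr x).integrableOn a1]
  have : r⁻¹ ^ 2 * yv r D * (∫ y in Metric.ball (0 : E3) D, yv r ‖y - x‖)
      - yp r D * ∫ ω : Metric.sphere (0 : E3) 1, yv r ‖D • (ω : E3) - x‖ ∂sig
      = 4 * π * yv r D := by rw [← b]; ring
  rw [this]
  field_simp

lemma energy {r D : ℝ} (hr : 0 < r) (hD : 0 < D) :
    ∫ x, (∫ y, yukawa r (x - y) ∂(yukawaSmear r D)) ∂(yukawaSmear r D)
      = (1 / 3) * (D * r⁻¹ ^ 2 + 3 * D⁻¹ + 3 * r⁻¹) * Real.exp (-2 * D / r) := by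
  have hsupp : ∀ᵐ x ∂(yukawaSmear r D), ‖x‖ ≤ D := by
    rw [yukawaSmear, ae_add_measure_iff]
    constructor
    · apply Measure.ae_smul_measure
      filter_upwards [ae_restrict_mem measurableSet_ball] with x hx
      exact (mem_ball_zero_iff.1 hx).le
    · apply Measure.ae_smul_measure
      rw [sphereSurfaceMeasure]
      apply Measure.ae_smul_measure
      rw [ae_map_iff (by fun_prop) (measurableSet_le measurable_norm measurable_const)]
      refine .of_forall fun ω => ?_
      rw [norm_smul]; simp [abs_of_pos hD]
  have h1 : ∀ᵐ x ∂(yukawaSmear r D), (∫ y, yukawa r (x - y) ∂(yukawaSmear r D)) = yv r D := by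
    filter_upwards [hsupp] with x hx using potential hr hD x hx
  rw [integral_congr_ae h1, smear_integral hr hD (fun _ => yv r D) measurable_const
    (integrableOn_const measure_ball_lt_top.ne) (integrable_const _)]
  rw [integral_const, integral_const, sig_univ, measureReal_restrict_apply_univ, Measure.real,
    EuclideanSpace.volume_ball_fin_three]
  have hexp : Real.exp (-2 * D / r) = Real.exp (-D / r) * Real.exp (-D / r) := by
    rw [← Real.exp_add]; congr 1; ring
  have hpi : (0:ℝ) ≤ π * 4 / 3 := by positivity
  rw [hexp, ENNReal.toReal_mul, ENNReal.toReal_pow, ENNReal.toReal_ofReal hD.le, ENNReal.toReal_ofReal hpi]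
  simp only [smul_eq_mul, yv, yp]
  field_simp
  ring

lemma W_eq (r D : ℝ) (x : E3) : yukawaW r D x = yv r (max ‖x‖ D) := by
  rw [yukawaW]
  split_ifs with h
  · rw [max_eq_right h.le, yv]
  · rw [max_eq_left (not_lt.1 h), yukawa, yv]

lemma W_lip {r D : ℝ} (hr : 0 < r) (hD : 0 < D) :
    ∃ C : NNReal, LipschitzWith C (yukawaW r D) := by
  have hC : 0 ≤ 1 / (r * D) + 1 / D ^ 2 := by positivity
  refine ⟨Real.toNNReal (1 / (r * D) + 1 / D ^ 2), ?_⟩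
  have h1 : LipschitzOnWith (Real.toNNReal (1 / (r * D) + 1 / D ^ 2)) (yv r) (Set.Ici D) := by
    refine (convex_Ici D).lipschitzOnWith_of_nnnorm_hasDerivWithin_le (f' := yv' r)
      (fun s hs => (yv_hasDerivAt (hD.trans_le hs).ne').hasDerivWithinAt) (fun s hs => ?_)
    rw [← NNReal.coe_le_coe, Real.coe_toNNReal _ hC]
    exact yv'_bound hr hD hs
  refine LipschitzWith.of_dist_le_mul fun x y => ?_
  rw [W_eq, W_eq]
  refine (h1.dist_le_mul _ (Set.mem_Ici.2 (le_max_right _ _)) _ (Set.mem_Ici.2 (le_max_right _ _))).trans ?_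
  gcongr
  rw [Real.dist_eq, dist_eq_norm]
  refine (abs_max_sub_max_le_abs _ _ _).trans (abs_norm_sub_norm_le x y)

lemma W_lineDeriv_in {r D : ℝ} (x v : E3) (h : ‖x‖ < D) :
    lineDeriv ℝ (yukawaW r D) x v = 0 := by
  have he : yukawaW r D =ᶠ[nhds x] fun _ => yv r D := by
    filter_upwards [(isOpen_lt continuous_norm continuous_const).mem_nhds h] with y hy
    rw [W_eq, max_eq_right (le_of_lt hy)]
  rw [he.lineDeriv_eq]
  simp [lineDeriv]

lemma W_lineDeriv_out {r D : ℝ} (hD : 0 < D) (x v : E3) (h : D < ‖x‖) :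
    lineDeriv ℝ (yukawaW r D) x v = yv' r ‖x‖ * (inner ℝ x v / ‖x‖) := by
  have he : yukawaW r D =ᶠ[nhds x] fun y => yv r ‖y‖ := by
    filter_upwards [(isOpen_lt continuous_const continuous_norm).mem_nhds h] with y hy
    rw [W_eq, max_eq_left (le_of_lt hy)]
  rw [he.lineDeriv_eq]
  have hx : x + (0 : ℝ) • v ≠ 0 := by
    rw [zero_smul, add_zero, ← norm_pos_iff]; linarith
  have := (yv_line r x v 0 hx).deriv
  rw [lineDeriv, this, zero_smul, add_zero]

lemma distrib {r D : ℝ} (hr : 0 < r) (hD : 0 < D) (f : E3 → ℝ) (hf : ContDiff ℝ (⊤ : ℕ∞) f)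
    (hfs : HasCompactSupport f) :
    (4 * π)⁻¹ * ∫ x, yukawaW r D x * (-(lap f x) + r⁻¹ ^ 2 * f x)
          = ∫ x, f x ∂(yukawaSmear r D) := by
  have hm : MeasurableSet {y : E3 | D < ‖y‖} := measurableSet_lt measurable_const measurable_norm
  obtain ⟨C, hW⟩ := W_lip hr hD
  have hWc := hW.continuous
  have hfi : Integrable f := hf.continuous.integrable_of_hasCompactSupport hfs
  have hdiff : Differentiable ℝ f := hf.differentiable (by simp)
  have hfd : ContDiff ℝ (⊤ : ℕ∞) (fderiv ℝ f) := hf.fderiv_right (by simp)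
  have hfdi : Integrable (fderiv ℝ f) :=
    hfd.continuous.integrable_of_hasCompactSupport (hfs.fderiv (𝕜 := ℝ))
  -- partial derivatives
  set g : Fin 3 → E3 → ℝ := fun i y => fderiv ℝ f y (EuclideanSpace.single i 1) with hg
  have hgs : ∀ i, ContDiff ℝ (⊤ : ℕ∞) (g i) := fun i => hfd.clm_apply contDiff_const
  have hgc : ∀ i, HasCompactSupport (g i) := fun i => hfs.fderiv_apply (𝕜 := ℝ) _
  have hggc : ∀ i, HasCompactSupport
      (fun x => fderiv ℝ (g i) x (EuclideanSpace.single i 1)) := fun i =>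
    (hgc i).fderiv_apply (𝕜 := ℝ) _
  have hggs : ∀ i, Continuous (fun x => fderiv ℝ (g i) x (EuclideanSpace.single i 1)) := fun i =>
    (((hgs i).fderiv_right (m := (⊤ : ℕ∞)) (by simp)).clm_apply contDiff_const).continuous
  have iW : ∀ i, Integrable (fun x => yukawaW r D x *
      fderiv ℝ (g i) x (EuclideanSpace.single i 1)) := fun i =>
    (hWc.mul (hggs i)).integrable_of_hasCompactSupport (hggc i).mul_left
  have iWf : Integrable (fun x => yukawaW r D x * f x) :=
    (hWc.mul hf.continuous).integrable_of_hasCompactSupport hfs.mul_left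
  have ibp : ∀ i, ∫ x, yukawaW r D x * fderiv ℝ (g i) x (EuclideanSpace.single i 1)
      = - ∫ x, lineDeriv ℝ (yukawaW r D) x (EuclideanSpace.single i 1) * g i x := by
    intro i
    obtain ⟨C', hC'⟩ := ContDiff.lipschitzWith_of_hasCompactSupport (hgc i) (hgs i) (by simp)
    rw [LipschitzWith.integral_lineDeriv_mul_eq hW hC' (hgc i), ← integral_neg]
    congr 1
    ext x
    rw [((hgs i).differentiable (by simp)).differentiableAt.lineDeriv_eq_fderiv, map_neg]
    ring
  have iLD : ∀ i, Integrable (fun x => lineDeriv ℝ (yukawaW r D) x (EuclideanSpace.single i 1)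
      * g i x) := by
    intro i
    refine Integrable.bdd_mul (c := C * ‖(EuclideanSpace.single i 1 : E3)‖)
      ((hgs i).continuous.integrable_of_hasCompactSupport (hgc i))
      (measurable_lineDeriv hWc).aestronglyMeasurable (.of_forall fun x => ?_)
    exact norm_lineDeriv_le_of_lipschitz ℝ hW
  set G : E3 → ℝ := fun y => fderiv ℝ f y (‖y‖⁻¹ • y) with hGdef
  have hGm : Measurable G := by
    have h1 : Measurable (fun y : E3 => ‖y‖⁻¹ * fderiv ℝ f y y) := by
      have : Continuous (fun y : E3 => fderiv ℝ f y y) := hfd.continuous.clm_apply continuous_id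
      exact measurable_norm.inv.mul this.measurable
    simpa [hGdef] using h1
  have hGi : Integrable G := by
    refine hfdi.mono hGm.aestronglyMeasurable (.of_forall fun y => ?_)
    refine (ContinuousLinearMap.le_opNorm _ _).trans ?_
    apply mul_le_of_le_one_right (norm_nonneg _)
    rw [norm_smul, norm_inv, norm_norm]
    exact inv_mul_le_one
  have hLi := L_int hr hD f G hfi hGi
  obtain ⟨hS, hA⟩ := lemA hr hD f G (sSup (Set.range fun y => |f y|)) (by
    refine .of_forall fun ω => ⟨fun s hs => ?_, .of_forall fun s => ?_⟩
    · have hs0 : 0 < s := hD.trans_le hs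
      have h1 : HasDerivAt (fun s : ℝ => s • (ω : E3)) (ω : E3) s := by
        simpa using (hasDerivAt_id s).smul_const (ω : E3)
      have h2 := (hdiff (s • (ω : E3))).hasFDerivAt.comp_hasDerivAt s h1
      refine h2.congr_deriv ?_
      have hn : ‖s • (ω : E3)‖ = s := by rw [norm_smul]; simp [abs_of_pos hs0]
      simp only [hGdef]
      rw [hn, smul_smul, inv_mul_cancel₀ hs0.ne', one_smul]
    · refine le_csSup ?_ (Set.mem_range_self (f := fun y => |f y|) (s • (ω : E3)))
      obtain ⟨K, hK⟩ := hfs.exists_bound_of_continuous hf.continuous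
      refine ⟨K, ?_⟩
      rintro _ ⟨y, rfl⟩
      exact hK y) hLi
  rw [smear_integral hr hD f hf.continuous.measurable hfi.integrableOn hS]
  congr 1
  have hlap : ∀ x, yukawaW r D x * (-(lap f x) + r⁻¹ ^ 2 * f x)
      = r⁻¹ ^ 2 * (yukawaW r D x * f x)
        - ∑ i, yukawaW r D x * fderiv ℝ (g i) x (EuclideanSpace.single i 1) := by
    intro x
    rw [lap, ← Finset.mul_sum]; ring
  simp only [hlap]
  rw [integral_sub (iWf.const_mul _) (integrable_finsetSum _ fun i _ => iW i),
    integral_finsetSum _ fun i _ => iW i]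
  simp only [ibp]
  rw [Finset.sum_neg_distrib, sub_neg_eq_add, add_comm, ← integral_finsetSum _ fun i _ => iLD i,
    ← integral_add (integrable_finsetSum _ fun i _ => iLD i) (iWf.const_mul _),
    sub_eq_add_neg, ← neg_mul, ← hA, ← integral_const_mul, ← compl_int,
    ← integral_add ((hfi.const_mul _).indicator hm.compl) hLi]
  apply integral_congr_ae
  have hnull : ∀ᵐ x : E3, ‖x‖ ≠ D := by
    have := Measure.addHaar_sphere (volume : Measure E3) 0 D
    rw [ae_iff]
    convert this using 2
    ext x; simp
  filter_upwards [hnull] with x hx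
  rcases lt_or_gt_of_ne hx with h | h
  · have hnm : x ∉ {y : E3 | D < ‖y‖} := not_lt.2 h.le
    have hmem : x ∈ {y : E3 | D < ‖y‖}ᶜ := hnm
    rw [Set.indicator_of_mem hmem, Set.indicator_of_notMem hnm]
    simp only [W_lineDeriv_in x _ h, W_eq, max_eq_right h.le]
    simp
    ring
  · have hmem : x ∈ {y : E3 | D < ‖y‖} := h
    have hnm : x ∉ {y : E3 | D < ‖y‖}ᶜ := fun h => h hmem
    rw [Set.indicator_of_mem hmem, Set.indicator_of_notMem hnm]
    simp only [W_lineDeriv_out hD x _ h, W_eq, max_eq_left h.le]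
    have hsum : fderiv ℝ f x x = ∑ i, x i * g i x := by
      have hxs : x = ∑ i, x i • (EuclideanSpace.single i 1 : E3) := by
        ext j; simp [Finset.sum_apply, Pi.single_apply]
      conv_lhs => rw [hxs]
      nth_rewrite 1 [← hxs]
      simp [hg]
    simp only [hGdef, map_smul, hsum, smul_eq_mul, zero_add]
    simp only [EuclideanSpace.inner_single_right, Finset.mul_sum]
    congr 1
    · refine Finset.sum_congr rfl fun i _ => ?_
      simp
      ring
    · ring

theorem yukawa_smear_properties (r D : ℝ) (hr : 0 < r) (hD : 0 < D) :
    -- `μ_D = (4π)⁻¹(−Δ + r⁻²)W_D` in the distributional sense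
    (∀ f : EuclideanSpace ℝ (Fin 3) → ℝ, ContDiff ℝ (⊤ : ℕ∞) f → HasCompactSupport f →
        (4 * π)⁻¹ * ∫ x, yukawaW r D x * (-(lap f x) + r⁻¹ ^ 2 * f x)
          = ∫ x, f x ∂(yukawaSmear r D)) ∧
    -- nonnegativity of the singular coefficient `−(4π)⁻¹ Y′(D)`
    (0 ≤ -(4 * π)⁻¹ * deriv (fun s : ℝ => Real.exp (-s / r) / s) D) ∧
    -- the self-energy of the smearing measure
    (∫ x, (∫ y, yukawa r (x - y) ∂(yukawaSmear r D)) ∂(yukawaSmear r D)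
      = (1 / 3) * (D * r⁻¹ ^ 2 + 3 * D⁻¹ + 3 * r⁻¹) * Real.exp (-2 * D / r)) := by
  refine ⟨fun f hf hfs => distrib hr hD f hf hfs, ?_, energy hr hD⟩
  rw [yv_deriv_eq hD]
  exact coef_nonneg hr hD

end
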